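/- For every even ℓ ≥ 4, all indices 1 ≤ i < j ≤ ℓ with ⌈i/2⌉ ≠ ⌈j/2⌉, and every vertex y of the graph G_ℓ, the closed neighborhood N[y] of y intersects the vertex set of the great cycle determined by P_i and P_j in at most 3 vertices. -/

import Mathlib

/-- Base relation for the theta graph `G'_ℓ`: the vertex `Sum.inl 0` is `v₁`, `Sum.inl 1` is `v₂`,
and `Sum.inr (i, k)` is the internal path vertex `x_{i+1, k+1}` (0-indexed encoding of the
1-indexed `x_{i,k}`, `1 ≤ i ≤ ℓ`, `1 ≤ k ≤ 6`). -/
def thetaRel (ℓ : ℕ) : Fin 2 ⊕ Fin ℓ × Fin 6 → Fin 2 ⊕ Fin ℓ × Fin 6 → Prop := fun a b =>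
  (∃ i : Fin ℓ, a = Sum.inl 0 ∧ b = Sum.inr (i, 0)) ∨
  (∃ (i : Fin ℓ) (k k' : Fin 6), (k : ℕ) + 1 = (k' : ℕ) ∧
      a = Sum.inr (i, k) ∧ b = Sum.inr (i, k')) ∨
  (∃ i : Fin ℓ, a = Sum.inr (i, 5) ∧ b = Sum.inl 1)

/-- The theta graph `G'_ℓ`: `v₁` and `v₂` joined by `ℓ` internally disjoint paths of length 7. -/
def thetaGraph (ℓ : ℕ) : SimpleGraph (Fin 2 ⊕ Fin ℓ × Fin 6) :=
  SimpleGraph.fromRel (thetaRel ℓ)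

/-- The graph `G_ℓ` (for even `ℓ`): obtained from the theta graph `G'_ℓ` by adding the matching
edges `x_{2i-1,1}x_{2i,1}` and `x_{2i-1,6}x_{2i,6}`; in the 0-indexed encoding these join
`Sum.inr (i, 0)` with `Sum.inr (j, 0)` and `Sum.inr (i, 5)` with `Sum.inr (j, 5)` whenever
`i ≠ j` and `⌊i/2⌋ = ⌊j/2⌋`. -/
def pairedThetaGraph (ℓ : ℕ) : SimpleGraph (Fin 2 ⊕ Fin ℓ × Fin 6) :=
  SimpleGraph.fromRel (fun a b => thetaRel ℓ a b ∨
    (∃ i j : Fin ℓ, (i : ℕ) / 2 = (j : ℕ) / 2 ∧ i ≠ j ∧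
      ((a = Sum.inr (i, 0) ∧ b = Sum.inr (j, 0)) ∨
        (a = Sum.inr (i, 5) ∧ b = Sum.inr (j, 5)))))

/-- The vertex set `{v₁, v₂} ∪ {x_{i,k}, x_{j,k} : 1 ≤ k ≤ 6}` of the great cycle determined by
the paths `P_i` and `P_j`. -/
def greatCycleSet (ℓ : ℕ) (i j : Fin ℓ) : Set (Fin 2 ⊕ Fin ℓ × Fin 6) :=
  {Sum.inl 0, Sum.inl 1} ∪ {x | ∃ k : Fin 6, x = Sum.inr (i, k) ∨ x = Sum.inr (j, k)}

/-!
Let the level of a vertex be its position on the paths, counted from `v₁`. Adjacent vertices differ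
by at most one level, so the closed neighborhood of an internal vertex `y` meets at most three
levels. Its internal vertices all lie on the path of `y` or on the partner of that path, and of
these two paths at most one belongs to the great cycle, so the great cycle contributes at most one
vertex per level. The closed neighborhood of `v₁` or `v₂` meets the cycle only in that vertex and
its neighbors on `P_i` and `P_j`.
-/

/-- The position of a vertex on the paths from `v₁` to `v₂`: the level of `v₁` is `0`, that of `v₂`
is `7`, and the `0`-indexed internal vertex `Sum.inr (i, k)` has level `k + 1`. -/
def thetaLevel {ℓ : ℕ} : Fin 2 ⊕ Fin ℓ × Fin 6 → ℕ :=
  Sum.elim ![0, 7] fun x => x.2 + 1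

section

variable {ℓ : ℕ} {i j : Fin ℓ} {a b : Fin 2 ⊕ Fin ℓ × Fin 6}

theorem thetaLevel_inl_injective :
    Function.Injective fun v : Fin 2 => thetaLevel (ℓ := ℓ) (Sum.inl v) := by
  change Function.Injective ![0, 7]
  decide

theorem thetaLevel_inl_ne_inr (v : Fin 2) (p : Fin ℓ × Fin 6) :
    thetaLevel (ℓ := ℓ) (Sum.inl v) ≠ thetaLevel (Sum.inr p) := by
  have hp : thetaLevel (Sum.inr p) = p.2 + 1 := rfl
  rw [hp]
  match v with
  | 0 => exact (Nat.succ_ne_zero _).symm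
  | 1 => exact fun h : 7 = (p.2 : ℕ) + 1 => by omega

theorem thetaRel.thetaLevel_eq (h : thetaRel ℓ a b) : thetaLevel b = thetaLevel a + 1 := by
  rcases h with ⟨i, rfl, rfl⟩ | ⟨i, k, k', hk, rfl, rfl⟩ | ⟨i, rfl, rfl⟩
  · simp [thetaLevel]
  · simp [thetaLevel, hk]
  · simp [thetaLevel]

theorem thetaRel.fst_eq {p q : Fin ℓ × Fin 6} (h : thetaRel ℓ (Sum.inr p) (Sum.inr q)) :
    p.1 = q.1 := by
  simp only [thetaRel, reduceCtorEq, false_and, and_false, exists_false, false_or, or_false,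
    Sum.inr.injEq] at h
  obtain ⟨i, k, k', -, rfl, rfl⟩ := h
  rfl

theorem pairedThetaGraph_adj_cases (h : (pairedThetaGraph ℓ).Adj a b) :
    thetaRel ℓ a b ∨ thetaRel ℓ b a ∨
      ∃ (p q : Fin ℓ) (k : Fin 6),
        (p : ℕ) / 2 = q / 2 ∧ a = Sum.inr (p, k) ∧ b = Sum.inr (q, k) := by
  rw [pairedThetaGraph, SimpleGraph.fromRel_adj] at h
  rcases h.2 with (h | ⟨p, q, hpq, -, ⟨ha, hb⟩ | ⟨ha, hb⟩⟩) |
    (h | ⟨p, q, hpq, -, ⟨hb, ha⟩ | ⟨hb, ha⟩⟩)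
  · exact .inl h
  · exact .inr (.inr ⟨p, q, 0, hpq, ha, hb⟩)
  · exact .inr (.inr ⟨p, q, 5, hpq, ha, hb⟩)
  · exact .inr (.inl h)
  · exact .inr (.inr ⟨q, p, 0, hpq.symm, ha, hb⟩)
  · exact .inr (.inr ⟨q, p, 5, hpq.symm, ha, hb⟩)

theorem thetaLevel_le_add_one_of_adj (h : (pairedThetaGraph ℓ).Adj a b) :
    thetaLevel a ≤ thetaLevel b + 1 := by
  rcases pairedThetaGraph_adj_cases h with h | h | ⟨p, q, k, -, rfl, rfl⟩
  · have hlevel := h.thetaLevel_eq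
    omega
  · exact h.thetaLevel_eq.le
  · simp [thetaLevel]

theorem fst_div_two_eq_of_adj {p q : Fin ℓ × Fin 6}
    (h : (pairedThetaGraph ℓ).Adj (Sum.inr p) (Sum.inr q)) : (p.1 : ℕ) / 2 = q.1 / 2 := by
  rcases pairedThetaGraph_adj_cases h with h | h | ⟨m, n, k, hmn, hp, hq⟩
  · rw [h.fst_eq]
  · rw [h.fst_eq]
  · cases hp
    cases hq
    exact hmn

theorem exists_eq_inr_of_adj_inl {v : Fin 2} (h : (pairedThetaGraph ℓ).Adj (Sum.inl v) b) :
    ∃ p : Fin ℓ, b = Sum.inr (p, ![0, 5] v) := by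
  rcases pairedThetaGraph_adj_cases h with h | h | ⟨p, q, k, -, hv, -⟩
  · rcases h with ⟨p, hv, hb⟩ | ⟨p, k, k', -, hv, -⟩ | ⟨p, hv, -⟩
    · cases hv
      exact ⟨p, hb⟩
    · cases hv
    · cases hv
  · rcases h with ⟨p, -, hv⟩ | ⟨p, k, k', -, -, hv⟩ | ⟨p, hb, hv⟩
    · cases hv
    · cases hv
    · cases hv
      exact ⟨p, hb⟩
  · cases hv

theorem inr_mem_greatCycleSet {p : Fin ℓ × Fin 6} :
    Sum.inr p ∈ greatCycleSet ℓ i j ↔ p.1 = i ∨ p.1 = j := by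
  simp [greatCycleSet, Prod.ext_iff, exists_or]

theorem thetaLevel_injOn_greatCycleSet_inter_pair (hpair : (i : ℕ) / 2 ≠ (j : ℕ) / 2) (c : ℕ) :
    Set.InjOn thetaLevel
      {x ∈ greatCycleSet ℓ i j | ∀ p : Fin ℓ × Fin 6, x = Sum.inr p → (p.1 : ℕ) / 2 = c} := by
  rintro (v | ⟨p, k⟩) ⟨hx, hxc⟩ (w | ⟨q, k'⟩) ⟨hy, hyc⟩ hlevel
  · rw [thetaLevel_inl_injective hlevel]
  · exact absurd hlevel (thetaLevel_inl_ne_inr v _)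
  · exact absurd hlevel.symm (thetaLevel_inl_ne_inr w _)
  · have hk : k = k' := Fin.ext (by simpa [thetaLevel] using hlevel)
    have hpq : (p : ℕ) / 2 = q / 2 := (hxc _ rfl).trans (hyc _ rfl).symm
    rw [inr_mem_greatCycleSet] at hx hy
    have hpath : p = q := by
      rcases hx with rfl | rfl <;> rcases hy with rfl | rfl
      · rfl
      · exact absurd hpq hpair
      · exact absurd hpq.symm hpair
      · rfl
    rw [hk, hpath]

theorem ncard_closedNeighborhood_inl_inter_greatCycleSet_le (v : Fin 2) :
    (insert (Sum.inl v) ((pairedThetaGraph ℓ).neighborSet (Sum.inl v)) ∩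
      greatCycleSet ℓ i j).ncard ≤ 3 := by
  let k : Fin 6 := ![0, 5] v
  let s : Finset (Fin 2 ⊕ Fin ℓ × Fin 6) := {Sum.inl v, Sum.inr (i, k), Sum.inr (j, k)}
  have hsub : insert (Sum.inl v) ((pairedThetaGraph ℓ).neighborSet (Sum.inl v)) ∩
      greatCycleSet ℓ i j ⊆ s := by
    rintro x ⟨rfl | hadj, hx⟩
    · simp [s]
    · obtain ⟨p, rfl⟩ := exists_eq_inr_of_adj_inl hadj
      rcases inr_mem_greatCycleSet.mp hx with rfl | rfl <;> simp [s, k]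
  calc _ ≤ _ := Set.ncard_le_ncard hsub
    _ ≤ 3 := by
      rw [Set.ncard_coe_finset]
      exact Finset.card_le_three

theorem ncard_closedNeighborhood_inr_inter_greatCycleSet_le
    (hpair : (i : ℕ) / 2 ≠ (j : ℕ) / 2) (p : Fin ℓ × Fin 6) :
    (insert (Sum.inr p) ((pairedThetaGraph ℓ).neighborSet (Sum.inr p)) ∩
      greatCycleSet ℓ i j).ncard ≤ 3 := by
  have hinj : Set.InjOn thetaLevel
      (insert (Sum.inr p) ((pairedThetaGraph ℓ).neighborSet (Sum.inr p)) ∩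
        greatCycleSet ℓ i j) := by
    refine (thetaLevel_injOn_greatCycleSet_inter_pair hpair (p.1 / 2)).mono ?_
    rintro x ⟨rfl | hadj, hx⟩
    · exact ⟨hx, fun q hq => by rw [Sum.inr.inj hq]⟩
    · refine ⟨hx, ?_⟩
      rintro q rfl
      exact (fst_div_two_eq_of_adj hadj).symm
  have hlevel : ∀ x ∈ insert (Sum.inr p) ((pairedThetaGraph ℓ).neighborSet (Sum.inr p)) ∩
      greatCycleSet ℓ i j, thetaLevel x ∈ (Finset.Icc (p.2 : ℕ) (p.2 + 2) : Set ℕ) := by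
    have hp : thetaLevel (Sum.inr p) = p.2 + 1 := rfl
    rintro x ⟨rfl | hadj, -⟩
    · simp [hp]
    · have hle := thetaLevel_le_add_one_of_adj hadj
      have hge := thetaLevel_le_add_one_of_adj hadj.symm
      simp only [Finset.coe_Icc, Set.mem_Icc]
      omega
  calc _ ≤ _ := Set.ncard_le_ncard_of_injOn thetaLevel hlevel hinj
    _ = 3 := by
      rw [Set.ncard_coe_finset, Nat.card_Icc]
      omega

end

theorem stmt_11_general (ℓ : ℕ) (i j : Fin ℓ) (hpair : (i : ℕ) / 2 ≠ (j : ℕ) / 2)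
    (y : Fin 2 ⊕ Fin ℓ × Fin 6) :
    ((insert y ((pairedThetaGraph ℓ).neighborSet y)) ∩ greatCycleSet ℓ i j).ncard ≤ 3 := by
  rcases y with v | p
  · exact ncard_closedNeighborhood_inl_inter_greatCycleSet_le v
  · exact ncard_closedNeighborhood_inr_inter_greatCycleSet_le hpair p

/-- For every even `ℓ ≥ 4`, indices `i < j` in different matched pairs, and every vertex `y`
of `G_ℓ`, the closed neighborhood `N[y]` meets the vertex set of the great cycle determined by
`P_i` and `P_j` in at most `3` vertices. -/
theorem stmt_11 (ℓ : ℕ) (heven : Even ℓ) (hℓ : 4 ≤ ℓ) (i j : Fin ℓ) (hij : i < j)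
    (hpair : (i : ℕ) / 2 ≠ (j : ℕ) / 2) (y : Fin 2 ⊕ Fin ℓ × Fin 6) :
    ((insert y ((pairedThetaGraph ℓ).neighborSet y)) ∩ greatCycleSet ℓ i j).ncard ≤ 3 :=
  stmt_11_general ℓ i j hpair y
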